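/- Assume the well p₋ is located at the origin and coordinates are chosen so that for some constants λ₁, λ₂ > 0, C > 0 and δ > 0 one has |W(p) − λ₁²p₁² − λ₂²p₂²| ≤ C|p|³ for all |p| ≤ δ. Then the rate of change of d_F-length with respect to enclosed area along the vertical fiber over the well satisfies lim_{α→0} (1/|α|) · inf{ E(γ) : γ : [a,b] → ℝ² locally Lipschitz, γ(a) = γ(b) = (0,0), 𝒜(γ) = α } = λ₁ + λ₂; equivalently, lim_{α→0} d_F((0,0,0),(0,0,α))/|α| = λ₁ + λ₂. -/

import Mathlib

open MeasureTheory Set Filter Topology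
open scoped ENNReal

noncomputable section

/-- The Euclidean norm of a vector in `ℝ × ℝ`. -/
def enorm2 (v : ℝ × ℝ) : ℝ := Real.sqrt (v.1 ^ 2 + v.2 ^ 2)

/-- The degenerate length `E(γ) = ∫ₐᵇ F(γ(t)) |γ'(t)| dt` of a planar curve. -/
def degLen (F : ℝ × ℝ → ℝ) (a b : ℝ) (γ : ℝ → ℝ × ℝ) : ℝ :=
  ∫ t in a..b, F (γ t) * enorm2 (deriv γ t)

/-- The signed area `𝒜(γ) = ∫ₐᵇ γ¹(t) (γ²)'(t) dt` of a planar curve. -/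
def sArea (a b : ℝ) (γ : ℝ → ℝ × ℝ) : ℝ :=
  ∫ t in a..b, (γ t).1 * deriv (fun s => (γ s).2) t

/-- A locally Lipschitz curve on `[a,b]` joining `p` to `q`. -/
def IsCurve (a b : ℝ) (γ : ℝ → ℝ × ℝ) (p q : ℝ × ℝ) : Prop :=
  a ≤ b ∧ LocallyLipschitz γ ∧ γ a = p ∧ γ b = q

/-- The standing hypotheses on the potential `W`: smooth, nonnegative, vanishing exactly at the
two distinct wells `pm` and `pp`, with positive definite Hessians there, and bounded away from
zero near infinity (`liminf_{|p|→∞} W(p) > 0`). -/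
structure TwoWell (W : ℝ × ℝ → ℝ) (pm pp : ℝ × ℝ) : Prop where
  smooth : ContDiff ℝ (⊤ : ℕ∞) W
  nonneg : ∀ p, 0 ≤ W p
  wells_ne : pm ≠ pp
  zeroSet : ∀ p, W p = 0 ↔ p = pm ∨ p = pp
  hess_m : ∀ v : ℝ × ℝ, v ≠ 0 → 0 < iteratedFDeriv ℝ 2 W pm ![v, v]
  hess_p : ∀ v : ℝ × ℝ, v ≠ 0 → 0 < iteratedFDeriv ℝ 2 W pp ![v, v]
  coercive : ∃ c > 0, ∃ R : ℝ, ∀ p : ℝ × ℝ, R ≤ ‖p‖ → c ≤ W p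

/-- The singular Carnot–Carathéodory distance on `ℝ³` induced by the conformal factor `F`:
the infimum of degenerate lengths of locally Lipschitz planar curves joining the planar
projections of `P` and `Q` whose signed area equals the difference of third coordinates. -/
def dCC (F : ℝ × ℝ → ℝ) (P Q : ℝ × ℝ × ℝ) : ℝ :=
  sInf { x | ∃ a b γ, IsCurve a b γ (P.1, P.2.1) (Q.1, Q.2.1) ∧
      sArea a b γ = Q.2.2 - P.2.2 ∧ degLen F a b γ = x }

theorem enorm2_le (v : ℝ × ℝ) : enorm2 v ≤ |v.1| + |v.2| := by
  unfold enorm2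
  apply Real.sqrt_le_iff.2
  refine ⟨by positivity, ?_⟩
  nlinarith [sq_abs v.1, sq_abs v.2, mul_nonneg (abs_nonneg v.1) (abs_nonneg v.2)]

theorem enorm2_nonneg (v : ℝ × ℝ) : 0 ≤ enorm2 v := Real.sqrt_nonneg _

theorem enorm2_sq (v : ℝ × ℝ) : enorm2 v ^ 2 = v.1 ^ 2 + v.2 ^ 2 :=
  Real.sq_sqrt (by positivity)

theorem continuous_enorm2 : Continuous enorm2 := by
  unfold enorm2; fun_prop

theorem ac_fst {γ : ℝ → ℝ × ℝ} (h : LocallyLipschitz γ) (a b : ℝ) :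
    AbsolutelyContinuousOnInterval (fun t => (γ t).1) a b := by
  have h1 : LocallyLipschitz (fun t => (γ t).1) :=
    LipschitzWith.prod_fst.locallyLipschitz.comp h
  obtain ⟨K, hK⟩ := (h1.locallyLipschitzOn (s := uIcc a b)).exists_lipschitzOnWith_of_compact
    isCompact_uIcc
  exact hK.absolutelyContinuousOnInterval

theorem ac_snd {γ : ℝ → ℝ × ℝ} (h : LocallyLipschitz γ) (a b : ℝ) :
    AbsolutelyContinuousOnInterval (fun t => (γ t).2) a b := by
  have h1 : LocallyLipschitz (fun t => (γ t).2) :=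
    LipschitzWith.prod_snd.locallyLipschitz.comp h
  obtain ⟨K, hK⟩ := (h1.locallyLipschitzOn (s := uIcc a b)).exists_lipschitzOnWith_of_compact
    isCompact_uIcc
  exact hK.absolutelyContinuousOnInterval

theorem ae_deriv_eq {γ : ℝ → ℝ × ℝ} (h : LocallyLipschitz γ) (a b : ℝ) :
    ∀ᵐ t, t ∈ uIcc a b →
      deriv γ t = (deriv (fun t => (γ t).1) t, deriv (fun t => (γ t).2) t) := by
  filter_upwards [(ac_fst h a b).ae_differentiableAt, (ac_snd h a b).ae_differentiableAt]
    with t h1 h2 ht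
  exact ((h1 ht).hasDerivAt.prodMk (h2 ht).hasDerivAt).deriv

theorem integrable_len {F : ℝ × ℝ → ℝ} (hF : Continuous F) {γ : ℝ → ℝ × ℝ}
    (h : LocallyLipschitz γ) (a b : ℝ) :
    IntervalIntegrable (fun t => F (γ t) * enorm2 (deriv γ t)) volume a b := by
  have h1 : IntervalIntegrable (fun t => enorm2 (deriv γ t)) volume a b := by
    have hx := (ac_fst h a b).intervalIntegrable_deriv.abs
    have hy := (ac_snd h a b).intervalIntegrable_deriv.abs
    refine (hx.add hy).mono_fun
      (continuous_enorm2.measurable.comp (measurable_deriv γ)).aestronglyMeasurable ?_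
    rw [EventuallyLE, ae_restrict_iff' measurableSet_uIoc]
    filter_upwards [ae_deriv_eq h a b] with t ht ht'
    rw [ht (uIoc_subset_uIcc ht')]
    rw [Real.norm_of_nonneg (enorm2_nonneg _)]
    exact (enorm2_le _).trans (le_abs_self _)
  exact h1.continuousOn_mul (hF.comp h.continuous).continuousOn

theorem calib {F : ℝ × ℝ → ℝ} (hF : Continuous F) {γ : ℝ → ℝ × ℝ}
    (h : LocallyLipschitz γ) {a b : ℝ} (hab : a ≤ b) (g1 g2 : ℝ → ℝ)
    (hg1 : Continuous g1) (hg2 : Continuous g2)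
    (hle : ∀ t ∈ Icc a b, ∀ v : ℝ × ℝ, g1 t * v.1 + g2 t * v.2 ≤ F (γ t) * enorm2 v) :
    ∫ t in a..b, (g1 t * deriv (fun t => (γ t).1) t + g2 t * deriv (fun t => (γ t).2) t)
      ≤ degLen F a b γ := by
  unfold degLen
  apply intervalIntegral.integral_mono_ae_restrict hab
  · exact ((ac_fst h a b).intervalIntegrable_deriv.continuousOn_mul hg1.continuousOn).add
      ((ac_snd h a b).intervalIntegrable_deriv.continuousOn_mul hg2.continuousOn)
  · exact integrable_len hF h a b
  · rw [EventuallyLE, ae_restrict_iff' measurableSet_Icc]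
    filter_upwards [ae_deriv_eq h a b] with t ht ht'
    rw [ht (by rwa [uIcc_of_le hab])]
    exact hle t ht' (deriv (fun t => (γ t).1) t, deriv (fun t => (γ t).2) t)

/-- integration by parts for loops -/
theorem loop_parts {γ : ℝ → ℝ × ℝ} (h : LocallyLipschitz γ) {a b : ℝ}
    (ha : γ a = (0, 0)) (hb : γ b = (0, 0)) (l1 l2 : ℝ) :
    ∫ t in a..b, ((-l2 * (γ t).2) * deriv (fun t => (γ t).1) t
      + (l1 * (γ t).1) * deriv (fun t => (γ t).2) t) = (l1 + l2) * sArea a b γ := by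
  have h1 := (ac_fst h a b).integral_mul_deriv_eq_deriv_mul (ac_snd h a b)
  simp only [ha, hb] at h1
  have i1 := (ac_snd h a b).intervalIntegrable_deriv.continuousOn_mul (ac_fst h a b).continuousOn
  have i2 := (ac_fst h a b).intervalIntegrable_deriv.mul_continuousOn (ac_snd h a b).continuousOn
  have : ∀ t, ((-l2 * (γ t).2) * deriv (fun t => (γ t).1) t
      + (l1 * (γ t).1) * deriv (fun t => (γ t).2) t)
      = (-l2) * (deriv (fun t => (γ t).1) t * (γ t).2)
        + l1 * ((γ t).1 * deriv (fun t => (γ t).2) t) := fun t => by ring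
  simp_rw [this]
  rw [intervalIntegral.integral_add (i2.const_mul _) (i1.const_mul _),
    intervalIntegral.integral_const_mul, intervalIntegral.integral_const_mul]
  unfold sArea
  rw [show (∫ x in a..b, deriv (fun t => (γ t).1) x * (γ x).2) =
    -∫ x in a..b, (γ x).1 * deriv (fun t => (γ t).2) x by linarith]
  ring

theorem exit_int {γ : ℝ → ℝ × ℝ} (h : LocallyLipschitz γ) {a b : ℝ}
    (ha : γ a = (0, 0)) (m : ℝ) :
    ∫ t in a..b, ((m * (γ t).1) * deriv (fun t => (γ t).1) t
      + (m * (γ t).2) * deriv (fun t => (γ t).2) t) = m * (enorm2 (γ b)) ^ 2 / 2 := by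
  have h1 := (ac_fst h a b).integral_mul_deriv_eq_deriv_mul (ac_fst h a b)
  have h2 := (ac_snd h a b).integral_mul_deriv_eq_deriv_mul (ac_snd h a b)
  simp only [ha] at h1 h2
  have i1 := (ac_fst h a b).intervalIntegrable_deriv.continuousOn_mul (ac_fst h a b).continuousOn
  have i2 := (ac_snd h a b).intervalIntegrable_deriv.continuousOn_mul (ac_snd h a b).continuousOn
  simp_rw [mul_assoc]
  rw [intervalIntegral.integral_add (i1.const_mul _) (i2.const_mul _),
    intervalIntegral.integral_const_mul, intervalIntegral.integral_const_mul, enorm2_sq]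
  simp_rw [mul_comm (deriv _ _) _] at h1 h2
  have e1 : ∫ t in a..b, (γ t).1 * deriv (fun t => (γ t).1) t = (γ b).1 ^ 2 / 2 := by linarith
  have e2 : ∫ t in a..b, (γ t).2 * deriv (fun t => (γ t).2) t = (γ b).2 ^ 2 / 2 := by linarith
  rw [e1, e2]; ring

def F0 (l1 l2 : ℝ) (p : ℝ × ℝ) : ℝ := Real.sqrt (l1 ^ 2 * p.1 ^ 2 + l2 ^ 2 * p.2 ^ 2)

theorem cs_calib (A B : ℝ) (v : ℝ × ℝ) (S : ℝ) (hS : A ^ 2 + B ^ 2 ≤ S) :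
    A * v.1 + B * v.2 ≤ Real.sqrt S * enorm2 v := by
  unfold enorm2
  rw [← Real.sqrt_mul (by nlinarith [sq_nonneg A, sq_nonneg B])]
  apply Real.le_sqrt_of_sq_le
  have : (A * v.1 + B * v.2) ^ 2 ≤ (A ^ 2 + B ^ 2) * (v.1 ^ 2 + v.2 ^ 2) := by
    nlinarith [sq_nonneg (A * v.2 - B * v.1)]
  exact this.trans (mul_le_mul_of_nonneg_right hS (by positivity))

/-- any loop staying in the good ball -/
theorem lower_in {F : ℝ × ℝ → ℝ} (hF : Continuous F) {γ : ℝ → ℝ × ℝ}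
    (h : LocallyLipschitz γ) {a b : ℝ} (hab : a ≤ b)
    (ha : γ a = (0, 0)) (hb : γ b = (0, 0)) (l1 l2 k : ℝ) (hk : 0 ≤ k)
    (hl1 : 0 < l1) (hl2 : 0 < l2)
    (hin : ∀ t ∈ Icc a b, k * F0 l1 l2 (γ t) ≤ F (γ t)) :
    k * (l1 + l2) * |sArea a b γ| ≤ degLen F a b γ := by
  have hc : Continuous γ := h.continuous
  have key : ∀ s : ℝ, s ^ 2 = 1 → k * (l1 + l2) * (s * sArea a b γ) ≤ degLen F a b γ := by
    intro s hs
    have h1 := loop_parts h ha hb (k * s * l1) (k * s * l2)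
    have h2 := calib hF h hab (fun t => -(k * s * l2) * (γ t).2) (fun t => (k * s * l1) * (γ t).1)
      (by fun_prop) (by fun_prop) (by
        intro t ht v
        have h3 := cs_calib (-(s * l2 * (γ t).2)) (s * l1 * (γ t).1) v
          (l1 ^ 2 * (γ t).1 ^ 2 + l2 ^ 2 * (γ t).2 ^ 2) (by
            apply le_of_eq
            linear_combination (l1 ^ 2 * (γ t).1 ^ 2 + l2 ^ 2 * (γ t).2 ^ 2) * hs)
        have h4 := mul_le_mul_of_nonneg_right (hin t ht) (enorm2_nonneg v)
        unfold F0 at h4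
        have h5 := mul_le_mul_of_nonneg_left h3 hk
        calc _ = k * (-(s * l2 * (γ t).2) * v.1 + s * l1 * (γ t).1 * v.2) := by ring
          _ ≤ _ := h5
          _ = _ := by ring
          _ ≤ _ := h4)
    rw [h1] at h2
    linarith
  rcases abs_cases (sArea a b γ) with ⟨e, _⟩ | ⟨e, _⟩ <;> rw [e]
  · simpa using key 1 (by norm_num)
  · simpa using key (-1) (by norm_num)

theorem degLen_nonneg {F : ℝ × ℝ → ℝ} (h0 : ∀ p, 0 ≤ F p) {γ : ℝ → ℝ × ℝ} {a b : ℝ}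
    (hab : a ≤ b) : 0 ≤ degLen F a b γ :=
  intervalIntegral.integral_nonneg hab fun t _ => mul_nonneg (h0 _) (enorm2_nonneg _)

/-- curves that leave the ball -/
theorem lower_out {F : ℝ × ℝ → ℝ} (hF : Continuous F) (h0 : ∀ p, 0 ≤ F p) {γ : ℝ → ℝ × ℝ}
    (h : LocallyLipschitz γ) {a b : ℝ} (hab : a ≤ b)
    (ha : γ a = (0, 0)) (l1 l2 k m r : ℝ) (hk : 0 ≤ k) (hr : 0 < r)
    (hm : 0 < m) (hm1 : m ≤ l1) (hm2 : m ≤ l2)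
    (hin : ∀ p, enorm2 p ≤ r → k * F0 l1 l2 p ≤ F p)
    (hout : ∃ t ∈ Icc a b, r < enorm2 (γ t)) :
    k * m * r ^ 2 / 2 ≤ degLen F a b γ := by
  have hc : Continuous γ := h.continuous
  have hc2 : Continuous (fun t => enorm2 (γ t)) := continuous_enorm2.comp hc
  -- first exit time
  let S := Icc a b ∩ {t | r ≤ enorm2 (γ t)}
  have hSc : IsCompact S := isCompact_Icc.inter_right (isClosed_le continuous_const hc2)
  obtain ⟨t1, ht1, hrt1⟩ := hout
  obtain ⟨τ, hτ, hmin⟩ := hSc.exists_isLeast ⟨t1, ht1, hrt1.le⟩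
  have hbef : ∀ t ∈ Ico a τ, enorm2 (γ t) ≤ r := by
    intro t ht
    by_contra hcon
    push Not at hcon
    have := hmin ⟨⟨ht.1, ht.2.le.trans hτ.1.2⟩, hcon.le⟩
    linarith [ht.2]
  have haτ : a < τ := by
    rcases hτ.1.1.eq_or_lt with e | e
    · have := hτ.2
      simp only [mem_ofPred_eq, ← e, ha] at this
      simp [enorm2] at this
      linarith
    · exact e
  have hbef' : ∀ t ∈ Icc a τ, enorm2 (γ t) ≤ r := by
    have hcl : IsClosed {t | enorm2 (γ t) ≤ r} := isClosed_le hc2 continuous_const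
    have := hcl.closure_subset_iff.2 (show Ico a τ ⊆ _ from hbef)
    rw [closure_Ico haτ.ne] at this
    exact this
  have heq : enorm2 (γ τ) = r := le_antisymm (hbef' τ ⟨haτ.le, le_rfl⟩) hτ.2
  have h1 := exit_int h (b := τ) ha (k * m)
  have h2 := calib hF h haτ.le (fun t => (k * m) * (γ t).1) (fun t => (k * m) * (γ t).2)
      (by fun_prop) (by fun_prop) (by
        intro t ht v
        have h3 := cs_calib (m * (γ t).1) (m * (γ t).2) v
          (l1 ^ 2 * (γ t).1 ^ 2 + l2 ^ 2 * (γ t).2 ^ 2) (by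
            rw [mul_pow, mul_pow]; gcongr)
        have h4 := mul_le_mul_of_nonneg_right (hin _ (hbef' t ht)) (enorm2_nonneg v)
        unfold F0 at h4
        have h5 := mul_le_mul_of_nonneg_left h3 hk
        calc _ = k * (m * (γ t).1 * v.1 + m * (γ t).2 * v.2) := by ring
          _ ≤ _ := h5
          _ = _ := by ring
          _ ≤ _ := h4)
  rw [h1, heq] at h2
  refine h2.trans ?_
  unfold degLen
  rw [← intervalIntegral.integral_add_adjacent_intervals (integrable_len hF h a τ)
    (integrable_len hF h τ b)]
  have := degLen_nonneg h0 (γ := γ) hτ.1.2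
  unfold degLen at this
  linarith

/-- comparison of `F` with the quadratic model -/
theorem compare (W : ℝ × ℝ → ℝ) (l1 l2 C δ m ε : ℝ)
    (hC : 0 < C) (hδ : 0 < δ) (hm : 0 < m) (hm1 : m ≤ l1) (hm2 : m ≤ l2)
    (hε : 0 < ε) (hε1 : ε < 1)
    (htaylor : ∀ p : ℝ × ℝ, enorm2 p ≤ δ →
      |W p - l1 ^ 2 * p.1 ^ 2 - l2 ^ 2 * p.2 ^ 2| ≤ C * enorm2 p ^ 3) :
    ∃ r > 0, ∀ p, enorm2 p ≤ r → (1 - ε) * F0 l1 l2 p ≤ Real.sqrt (W p) ∧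
      Real.sqrt (W p) ≤ (1 + ε) * F0 l1 l2 p := by
  refine ⟨min δ (ε * m ^ 2 / C), by positivity, fun p hp => ?_⟩
  have hp1 := hp.trans (min_le_left _ _)
  have hp2 := hp.trans (min_le_right _ _)
  rw [le_div_iff₀ hC] at hp2
  have ht := abs_le.1 (htaylor p hp1)
  set Q := l1 ^ 2 * p.1 ^ 2 + l2 ^ 2 * p.2 ^ 2 with hQ
  have hQm : m ^ 2 * enorm2 p ^ 2 ≤ Q := by
    rw [enorm2_sq, mul_add, hQ]; gcongr
  have hQ0 : 0 ≤ Q := by positivity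
  have hb : C * enorm2 p ^ 3 ≤ ε * Q := by
    calc C * enorm2 p ^ 3 = (enorm2 p * C) * enorm2 p ^ 2 := by ring
      _ ≤ (ε * m ^ 2) * enorm2 p ^ 2 := by gcongr
      _ = ε * (m ^ 2 * enorm2 p ^ 2) := by ring
      _ ≤ _ := by gcongr
  have hsq : F0 l1 l2 p ^ 2 = Q := Real.sq_sqrt hQ0
  have hF0 : 0 ≤ F0 l1 l2 p := Real.sqrt_nonneg _
  constructor
  · apply Real.le_sqrt_of_sq_le
    rw [mul_pow, hsq]
    nlinarith
  · apply Real.sqrt_le_iff.2 ⟨by positivity, ?_⟩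
    rw [mul_pow, hsq]
    nlinarith [mul_nonneg (sq_nonneg ε) hQ0, mul_nonneg hε.le hQ0]

theorem enorm2_add (u v : ℝ × ℝ) : enorm2 (u + v) ≤ enorm2 u + enorm2 v := by
  have hu := enorm2_nonneg u
  have hv := enorm2_nonneg v
  have h := cs_calib u.1 u.2 v _ le_rfl
  change _ ≤ enorm2 u * enorm2 v at h
  apply Real.sqrt_le_iff.2 ⟨by positivity, ?_⟩
  have e1 := enorm2_sq u
  have e2 := enorm2_sq v
  simp only [Prod.fst_add, Prod.snd_add]
  nlinarith

theorem enorm2_mul (c : ℝ) (v : ℝ × ℝ) : enorm2 (c * v.1, c * v.2) = |c| * enorm2 v := by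
  unfold enorm2
  rw [← Real.sqrt_sq_eq_abs, ← Real.sqrt_mul (sq_nonneg c)]
  congr 1; ring

theorem enorm2_swap (a b : ℝ) : enorm2 (-a, b) = enorm2 (b, a) := by
  unfold enorm2
  congr 1; ring

theorem F0_eq (l1 l2 : ℝ) (P : ℝ × ℝ) : F0 l1 l2 P = enorm2 (l1 * P.1, l2 * P.2) := by
  unfold F0 enorm2
  congr 1; ring

def spiral (p q s M : ℝ) (u : ℝ) : ℝ × ℝ :=
  (s * q * (Real.sin u * Real.cos (M * u)), s * p * (Real.sin u * Real.sin (M * u)))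

theorem spiral_pt (p q s M σ S c X Y : ℝ) (hp : 0 < p) (hq : 0 < q) (hs : 0 ≤ s)
    (hSc : S ^ 2 + c ^ 2 = 1) (hXY : X ^ 2 + Y ^ 2 = 1) (hσ : σ * M = |M|) (hσ1 : |σ| = 1) :
    F0 (p ^ 2) (q ^ 2) (s * q * (S * X), s * p * (S * Y)) *
      enorm2 (s * q * (c * X - M * S * Y), s * p * (c * Y + M * S * X)) ≤
    (-(σ * q ^ 2) * (s * p * (S * Y)) * (s * q * (c * X - M * S * Y)) +
      (σ * p ^ 2) * (s * q * (S * X)) * (s * p * (c * Y + M * S * X)))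
      + p * q * ((p + q) ^ 2 + (p ^ 2 + q ^ 2)) * s ^ 2 := by
  have hS : |S| ≤ 1 := abs_le_one_iff_mul_self_le_one.2 (by nlinarith [sq_nonneg c])
  have hc : |c| ≤ 1 := abs_le_one_iff_mul_self_le_one.2 (by nlinarith [sq_nonneg S])
  have hX : |X| ≤ 1 := abs_le_one_iff_mul_self_le_one.2 (by nlinarith [sq_nonneg Y])
  have hY : |Y| ≤ 1 := abs_le_one_iff_mul_self_le_one.2 (by nlinarith [sq_nonneg X])
  set T := enorm2 (p * X, q * Y) with hT
  have hT0 : 0 ≤ T := enorm2_nonneg _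
  have hTsq : T ^ 2 = p ^ 2 * X ^ 2 + q ^ 2 * Y ^ 2 := by
    rw [hT, enorm2_sq]; ring
  have hTle : T ≤ p + q := by
    refine (enorm2_le _).trans ?_
    simp only [abs_mul, abs_of_pos hp, abs_of_pos hq]
    nlinarith
  have e1 : F0 (p ^ 2) (q ^ 2) (s * q * (S * X), s * p * (S * Y)) = s * p * q * |S| * T := by
    rw [F0_eq]
    have := enorm2_mul (s * p * q * S) (p * X, q * Y)
    rw [abs_mul, abs_of_nonneg (by positivity : 0 ≤ s * p * q)] at this
    rw [← this]
    congr 1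
    ext <;> simp only <;> ring
  have e2 : enorm2 (s * q * (c * X - M * S * Y), s * p * (c * Y + M * S * X)) ≤
      s * (p + q) + s * |M| * |S| * T := by
    have h1 : (s * q * (c * X - M * S * Y), s * p * (c * Y + M * S * X)) =
      ((s * q * (c * X), s * p * (c * Y)) + (-(s * M * S * (q * Y)), s * M * S * (p * X)) : ℝ × ℝ) := by
      ext <;> simp only [Prod.fst_add, Prod.snd_add] <;> ring
    rw [h1]
    refine (enorm2_add _ _).trans ?_
    rw [enorm2_swap]
    have h2 := enorm2_mul (s * M * S) (p * X, q * Y)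
    simp only at h2
    rw [h2, abs_mul, abs_mul, abs_of_nonneg hs, ← hT]
    gcongr
    refine (enorm2_le _).trans ?_
    simp only [abs_mul, abs_of_pos hp, abs_of_pos hq, abs_of_nonneg hs]
    have hcX : |c| * |X| ≤ 1 := mul_le_one₀ hc (abs_nonneg _) hX
    have hcY : |c| * |Y| ≤ 1 := mul_le_one₀ hc (abs_nonneg _) hY
    have := mul_le_mul_of_nonneg_left hcX (by positivity : 0 ≤ s * q)
    have := mul_le_mul_of_nonneg_left hcY (by positivity : 0 ≤ s * p)
    linarith
  rw [e1]
  have hST : |S| * T ≤ p + q := by nlinarith [abs_nonneg S]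
  have e3 : s * p * q * |S| * T * enorm2 (s * q * (c * X - M * S * Y), s * p * (c * Y + M * S * X))
      ≤ s ^ 2 * p * q * (p + q) ^ 2 + s ^ 2 * p * q * |M| * S ^ 2 * T ^ 2 := by
    calc _ ≤ s * p * q * |S| * T * (s * (p + q) + s * |M| * |S| * T) := by gcongr
      _ = s ^ 2 * p * q * (p + q) * (|S| * T) + s ^ 2 * p * q * |M| * |S| ^ 2 * T ^ 2 := by ring
      _ ≤ s ^ 2 * p * q * (p + q) * (p + q) + s ^ 2 * p * q * |M| * |S| ^ 2 * T ^ 2 := by gcongr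
      _ = _ := by rw [sq_abs]; ring
  refine e3.trans ?_
  rw [hTsq, ← hσ]
  have h5 : -(σ * (S * c) * (X * Y) * (p ^ 2 - q ^ 2)) ≤ p ^ 2 + q ^ 2 := by
    refine (neg_le_abs _).trans ?_
    rw [abs_mul, abs_mul, abs_mul, abs_mul, abs_mul, hσ1, one_mul]
    have a1 : |S| * |c| ≤ 1 := mul_le_one₀ hS (abs_nonneg _) hc
    have a2 : |X| * |Y| ≤ 1 := mul_le_one₀ hX (abs_nonneg _) hY
    have a3 : |S| * |c| * (|X| * |Y|) ≤ 1 := mul_le_one₀ a1 (by positivity) a2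
    have a4 : |p ^ 2 - q ^ 2| ≤ p ^ 2 + q ^ 2 := by
      rw [abs_le]; constructor <;> nlinarith [sq_nonneg p, sq_nonneg q]
    calc _ ≤ 1 * (p ^ 2 + q ^ 2) := by gcongr
      _ = _ := one_mul _
  have h6 := mul_le_mul_of_nonneg_left h5 (by positivity : 0 ≤ s ^ 2 * p * q)
  linarith

theorem spiral_hasDeriv (p q s M u : ℝ) :
    HasDerivAt (fun t => (spiral p q s M t).1)
      (s * q * (Real.cos u * Real.cos (M * u) - M * Real.sin u * Real.sin (M * u))) u ∧
    HasDerivAt (fun t => (spiral p q s M t).2)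
      (s * p * (Real.cos u * Real.sin (M * u) + M * Real.sin u * Real.cos (M * u))) u := by
  have hM : HasDerivAt (fun t => M * t) M u := by simpa using (hasDerivAt_id u).const_mul M
  constructor
  · refine HasDerivAt.congr_deriv (((Real.hasDerivAt_sin u).fun_mul hM.cos).const_mul (s * q)) ?_
    ring
  · refine HasDerivAt.congr_deriv (((Real.hasDerivAt_sin u).fun_mul hM.sin).const_mul (s * p)) ?_
    ring

theorem spiral_lip (p q s M : ℝ) : LocallyLipschitz (spiral p q s M) := by
  apply ContDiff.locallyLipschitz (𝕂 := ℝ)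
  unfold spiral
  fun_prop

theorem spiral_area (p q s M : ℝ) :
    sArea 0 Real.pi (spiral p q s M) = s ^ 2 * p * q * M * Real.pi / 4 := by
  have h := loop_parts (spiral_lip p q s M) (a := 0) (b := Real.pi)
    (by simp [spiral]) (by simp [spiral]) 1 1
  have : ∀ t, (-1 * (spiral p q s M t).2) * deriv (fun t => (spiral p q s M t).1) t
      + (1 * (spiral p q s M t).1) * deriv (fun t => (spiral p q s M t).2) t =
      (s ^ 2 * p * q * M) * Real.sin t ^ 2 := by
    intro t
    rw [(spiral_hasDeriv p q s M t).1.deriv, (spiral_hasDeriv p q s M t).2.deriv]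
    simp only [spiral]
    linear_combination (s ^ 2 * p * q * M * Real.sin t ^ 2) * Real.sin_sq_add_cos_sq (M * t)
  simp_rw [this] at h
  rw [intervalIntegral.integral_const_mul, integral_sin_sq] at h
  simp at h
  linarith

theorem spiral_len {F : ℝ × ℝ → ℝ} (hF : Continuous F) (p q s M k r : ℝ)
    (hp : 0 < p) (hq : 0 < q) (hs : 0 ≤ s) (hk : 0 ≤ k) (hsr : s * (p + q) ≤ r)
    (hin : ∀ P, enorm2 P ≤ r → F P ≤ k * F0 (p ^ 2) (q ^ 2) P) :
    degLen F 0 Real.pi (spiral p q s M) ≤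
      k * ((p ^ 2 + q ^ 2) * |sArea 0 Real.pi (spiral p q s M)| +
        p * q * ((p + q) ^ 2 + (p ^ 2 + q ^ 2)) * s ^ 2 * Real.pi) := by
  obtain ⟨σ, hσ, hσ1⟩ : ∃ σ : ℝ, σ * M = |M| ∧ |σ| = 1 := by
    rcases abs_cases M with ⟨e, _⟩ | ⟨e, _⟩
    · exact ⟨1, by rw [e]; ring, by simp⟩
    · exact ⟨-1, by rw [e]; ring, by simp⟩
  have hlip := spiral_lip p q s M
  have hA : |sArea 0 Real.pi (spiral p q s M)| = σ * sArea 0 Real.pi (spiral p q s M) := by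
    rw [spiral_area, show s ^ 2 * p * q * M * Real.pi / 4 = (s ^ 2 * p * q * Real.pi / 4) * M by ring,
      abs_mul, ← hσ, abs_of_nonneg (by have := Real.pi_pos; positivity)]
    ring
  have hparts := loop_parts hlip (a := 0) (b := Real.pi)
    (by simp [spiral]) (by simp [spiral]) (σ * p ^ 2) (σ * q ^ 2)
  set K := p * q * ((p + q) ^ 2 + (p ^ 2 + q ^ 2)) * s ^ 2 with hK
  have hc := hlip.continuous
  have i1 : IntervalIntegrable (fun t => (-(σ * q ^ 2) * (spiral p q s M t).2) *
      deriv (fun t => (spiral p q s M t).1) t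
      + ((σ * p ^ 2) * (spiral p q s M t).1) * deriv (fun t => (spiral p q s M t).2) t)
      volume 0 Real.pi :=
    ((ac_fst hlip 0 Real.pi).intervalIntegrable_deriv.continuousOn_mul (by fun_prop)).add
      ((ac_snd hlip 0 Real.pi).intervalIntegrable_deriv.continuousOn_mul (by fun_prop))
  have i2 : IntervalIntegrable (fun _ : ℝ => K) volume 0 Real.pi := intervalIntegrable_const
  have hmono : degLen F 0 Real.pi (spiral p q s M) ≤ ∫ t in (0:ℝ)..Real.pi,
      k * (((-(σ * q ^ 2) * (spiral p q s M t).2) * deriv (fun t => (spiral p q s M t).1) t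
      + ((σ * p ^ 2) * (spiral p q s M t).1) * deriv (fun t => (spiral p q s M t).2) t) + K) := by
    apply intervalIntegral.integral_mono_on Real.pi_pos.le (integrable_len hF hlip _ _)
      ((i1.add i2).const_mul k)
    intro t _
    have d1 := (spiral_hasDeriv p q s M t).1
    have d2 := (spiral_hasDeriv p q s M t).2
    have d3 : deriv (spiral p q s M) t = _ := (d1.prodMk d2).deriv
    rw [d3, d1.deriv, d2.deriv]
    have hpt := spiral_pt p q s M σ (Real.sin t) (Real.cos t) (Real.cos (M * t))
      (Real.sin (M * t)) hp hq hs (Real.sin_sq_add_cos_sq t) (Real.cos_sq_add_sin_sq _) hσ hσ1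
    have hball : enorm2 (spiral p q s M t) ≤ r := by
      refine (enorm2_le _).trans (le_trans ?_ hsr)
      simp only [spiral, abs_mul, abs_of_pos hp, abs_of_pos hq, abs_of_nonneg hs]
      have a1 : |Real.sin t| * |Real.cos (M * t)| ≤ 1 :=
        mul_le_one₀ (Real.abs_sin_le_one _) (abs_nonneg _) (Real.abs_cos_le_one _)
      have a2 : |Real.sin t| * |Real.sin (M * t)| ≤ 1 :=
        mul_le_one₀ (Real.abs_sin_le_one _) (abs_nonneg _) (Real.abs_sin_le_one _)
      have := mul_le_mul_of_nonneg_left a1 (by positivity : 0 ≤ s * q)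
      have := mul_le_mul_of_nonneg_left a2 (by positivity : 0 ≤ s * p)
      linarith
    refine (mul_le_mul_of_nonneg_right (hin _ hball) (enorm2_nonneg _)).trans ?_
    rw [mul_assoc]
    exact mul_le_mul_of_nonneg_left hpt hk
  refine hmono.trans (le_of_eq ?_)
  rw [intervalIntegral.integral_const_mul, intervalIntegral.integral_add i1 i2, hparts, hA,
    intervalIntegral.integral_const, smul_eq_mul]
  ring

theorem upper_ex {F : ℝ × ℝ → ℝ} (hF : Continuous F) (l1 l2 k r η : ℝ)
    (hl1 : 0 < l1) (hl2 : 0 < l2) (hk : 0 ≤ k) (hr : 0 < r) (hη : 0 < η)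
    (hin : ∀ P, enorm2 P ≤ r → F P ≤ k * F0 l1 l2 P) :
    ∀ᶠ α in 𝓝[≠] (0:ℝ), ∃ a b γ, IsCurve a b γ (0, 0) (0, 0) ∧ sArea a b γ = α ∧
      degLen F a b γ ≤ k * (l1 + l2 + η) * |α| := by
  set p := Real.sqrt l1 with hp'
  set q := Real.sqrt l2 with hq'
  have hp : 0 < p := Real.sqrt_pos.2 hl1
  have hq : 0 < q := Real.sqrt_pos.2 hl2
  have ep : p ^ 2 = l1 := Real.sq_sqrt hl1.le
  have eq : q ^ 2 = l2 := Real.sq_sqrt hl2.le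
  rw [← ep, ← eq] at hin ⊢
  clear_value p q
  have hpi := Real.pi_pos
  set K := p * q * ((p + q) ^ 2 + (p ^ 2 + q ^ 2)) * Real.pi with hK
  have hK0 : 0 < K := by positivity
  have hev : ∀ᶠ α in 𝓝[≠] (0:ℝ), Real.sqrt (|α| * (η / K)) * (p + q) < r := by
    apply Filter.Eventually.filter_mono nhdsWithin_le_nhds
    have hcont : Continuous (fun α : ℝ => Real.sqrt (|α| * (η / K)) * (p + q)) := by fun_prop
    apply hcont.continuousAt.eventually_lt continuousAt_const
    simpa using hr
  filter_upwards [hev, self_mem_nhdsWithin] with α hα hα0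
  have hα0 : α ≠ 0 := hα0
  set s := Real.sqrt (|α| * (η / K)) with hs
  have hs2 : s ^ 2 = |α| * (η / K) := Real.sq_sqrt (by positivity)
  have hspos : 0 < s := Real.sqrt_pos.2 (by positivity)
  have harea : sArea 0 Real.pi (spiral p q s (4 * α / (s ^ 2 * p * q * Real.pi))) = α := by
    rw [spiral_area]; field_simp
  refine ⟨0, Real.pi, spiral p q s (4 * α / (s ^ 2 * p * q * Real.pi)),
    ⟨hpi.le, spiral_lip _ _ _ _, by simp [spiral], by simp [spiral]⟩, harea, ?_⟩
  refine (spiral_len hF p q s _ k r hp hq hspos.le hk hα.le hin).trans (le_of_eq ?_)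
  rw [harea]
  have : p * q * ((p + q) ^ 2 + (p ^ 2 + q ^ 2)) * s ^ 2 * Real.pi = η * |α| := by
    calc _ = K * s ^ 2 := by rw [hK]; ring
      _ = _ := by rw [hs2]; field_simp
  rw [this]; ring

theorem vertical_rate_aux
    (W : ℝ × ℝ → ℝ) (pp : ℝ × ℝ) (hW : TwoWell W (0, 0) pp)
    (F : ℝ × ℝ → ℝ) (hF : F = fun p => Real.sqrt (W p))
    (l1 l2 C δ : ℝ) (hl1 : 0 < l1) (hl2 : 0 < l2) (hC : 0 < C) (hδ : 0 < δ)
    (htaylor : ∀ p : ℝ × ℝ, enorm2 p ≤ δ →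
      |W p - l1 ^ 2 * p.1 ^ 2 - l2 ^ 2 * p.2 ^ 2| ≤ C * enorm2 p ^ 3) :
    Tendsto (fun α =>
        sInf { x | ∃ a b γ, IsCurve a b γ (0, 0) (0, 0) ∧ sArea a b γ = α ∧
          degLen F a b γ = x } / |α|)
      (𝓝[≠] (0:ℝ)) (𝓝 (l1 + l2)) := by
  have hFc : Continuous F := by
    have := hW.smooth.continuous
    rw [hF]; fun_prop
  have hF0 : ∀ p, 0 ≤ F p := fun p => by rw [hF]; exact Real.sqrt_nonneg _
  set m := min l1 l2 with hm'
  have hm : 0 < m := lt_min hl1 hl2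
  rw [Metric.tendsto_nhds]
  intro e he
  set L := l1 + l2 with hL
  have hLpos : 0 < L := by positivity
  set ε := min (1 / 2) (e / (4 * (L + 1))) with hε'
  have hε : 0 < ε := by positivity
  have hε1 : ε < 1 := (min_le_left _ _).trans_lt (by norm_num)
  have hε2 : ε * (L + 1) ≤ e / 4 := by
    have := min_le_right (1 / 2) (e / (4 * (L + 1)))
    calc ε * (L + 1) ≤ (e / (4 * (L + 1))) * (L + 1) := by gcongr
      _ = e / 4 := by field_simp
  obtain ⟨r, hr, hcmp⟩ := compare W l1 l2 C δ m ε hC hδ hm (min_le_left _ _) (min_le_right _ _)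
    hε hε1 htaylor
  have hη : 0 < min 1 (e / 4) := by positivity
  have hup := upper_ex hFc l1 l2 (1 + ε) r (min 1 (e / 4)) hl1 hl2 (by linarith) hr hη
    (fun P hP => by rw [hF]; exact (hcmp P hP).2)
  have hsmall : ∀ᶠ α in 𝓝[≠] (0:ℝ), L * |α| < m * r ^ 2 / 2 := by
    apply Filter.Eventually.filter_mono nhdsWithin_le_nhds
    have hcont : Continuous (fun α : ℝ => L * |α|) := by fun_prop
    apply hcont.continuousAt.eventually_lt continuousAt_const
    simp only [abs_zero, mul_zero]; positivity
  filter_upwards [hup, hsmall, self_mem_nhdsWithin] with α ⟨a, b, γ, hγ, hA, hE⟩ hα hα0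
  have hα0 : α ≠ 0 := hα0
  have hαp : 0 < |α| := abs_pos.2 hα0
  have hlow : (1 - ε) * L * |α| ≤ sInf { x | ∃ a b γ, IsCurve a b γ (0, 0) (0, 0) ∧
      sArea a b γ = α ∧ degLen F a b γ = x } := by
    refine le_csInf ?_ ?_
    · exact ⟨_, a, b, γ, hγ, hA, rfl⟩
    rintro x ⟨a, b, γ, ⟨hab, hlip, ha, hb⟩, hA, rfl⟩
    by_cases hout : ∃ t ∈ Icc a b, r < enorm2 (γ t)
    · have := lower_out hFc hF0 hlip hab ha l1 l2 (1 - ε) m r (by linarith) hr hm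
        (min_le_left _ _) (min_le_right _ _)
        (fun P hP => by rw [hF]; exact (hcmp P hP).1) hout
      refine le_trans ?_ this
      have := mul_le_mul_of_nonneg_left hα.le (by linarith : 0 ≤ 1 - ε)
      linarith
    · push Not at hout
      have := lower_in hFc hlip hab ha hb l1 l2 (1 - ε) (by linarith) hl1 hl2
        (fun t ht => by rw [hF]; exact (hcmp _ (hout t ht)).1)
      rwa [hA] at this
  have hupp : sInf { x | ∃ a b γ, IsCurve a b γ (0, 0) (0, 0) ∧
      sArea a b γ = α ∧ degLen F a b γ = x } ≤ (1 + ε) * (L + min 1 (e / 4)) * |α| := by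
    refine le_trans (csInf_le ?_ ?_) hE
    swap
    · exact ⟨a, b, γ, hγ, hA, rfl⟩
    refine ⟨0, ?_⟩
    rintro x ⟨a, b, γ, ⟨hab, _⟩, _, rfl⟩
    exact degLen_nonneg hF0 hab
  rw [← div_le_iff₀ hαp] at hupp
  rw [← le_div_iff₀ hαp] at hlow
  rw [Real.dist_eq, abs_lt]
  have hm1 := min_le_left 1 (e / 4)
  have hm2 := min_le_right 1 (e / 4)
  constructor
  · nlinarith
  · nlinarith

/-- with the well `p₋` at the origin and `W` agreeing with the quadratic
`λ₁²p₁² + λ₂²p₂²` to third order, the cost per unit area of vertical segments over the well is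
`λ₁ + λ₂`: as `α → 0`, `d_F((0,0,0),(0,0,α))/|α| → λ₁ + λ₂`, and equivalently for the infimum
of degenerate lengths of loops at the origin enclosing area `α`. -/
theorem vertical_rate
    (W : ℝ × ℝ → ℝ) (pp : ℝ × ℝ) (hW : TwoWell W (0, 0) pp)
    (F : ℝ × ℝ → ℝ) (hF : F = fun p => Real.sqrt (W p))
    (l1 l2 C δ : ℝ) (hl1 : 0 < l1) (hl2 : 0 < l2) (hC : 0 < C) (hδ : 0 < δ)
    (htaylor : ∀ p : ℝ × ℝ, enorm2 p ≤ δ →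
      |W p - l1 ^ 2 * p.1 ^ 2 - l2 ^ 2 * p.2 ^ 2| ≤ C * enorm2 p ^ 3) :
    Tendsto (fun α =>
        sInf { x | ∃ a b γ, IsCurve a b γ (0, 0) (0, 0) ∧ sArea a b γ = α ∧
          degLen F a b γ = x } / |α|)
      (𝓝[≠] (0:ℝ)) (𝓝 (l1 + l2)) ∧
    Tendsto (fun α => dCC F (0, 0, 0) (0, 0, α) / |α|) (𝓝[≠] (0:ℝ)) (𝓝 (l1 + l2)) := by
  have h := vertical_rate_aux W pp hW F hF l1 l2 C δ hl1 hl2 hC hδ htaylor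
  refine ⟨h, ?_⟩
  simpa only [dCC, sub_zero] using h
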